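/- For the circular-chain matrix S with 12MG - 9γ² ≠ 0, the nonzero eigenvalues λ₂ and λ₃ are semi-simple: each has geometric multiplicity equal to its algebraic multiplicity 2; whereas the zero eigenvalue λ₁ = 0 is defective (geometric multiplicity 1, algebraic multiplicity 2). -/

import Mathlib

open Polynomial

/-- The system matrix of the three-mass circular chain. -/
noncomputable def Smat (G M γ : ℝ) : Matrix (Fin 6) (Fin 6) ℂ :=
  !![0, 0, 0, 1/(M:ℂ), 0, 0;
     0, 0, 0, 0, 1/(M:ℂ), 0;
     0, 0, 0, 0, 0, 1/(M:ℂ);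
     -2*(G:ℂ), (G:ℂ), (G:ℂ), -2*(γ:ℂ)/(M:ℂ), (γ:ℂ)/(M:ℂ), (γ:ℂ)/(M:ℂ);
     (G:ℂ), -2*(G:ℂ), (G:ℂ), (γ:ℂ)/(M:ℂ), -2*(γ:ℂ)/(M:ℂ), (γ:ℂ)/(M:ℂ);
     (G:ℂ), (G:ℂ), -2*(G:ℂ), (γ:ℂ)/(M:ℂ), (γ:ℂ)/(M:ℂ), -2*(γ:ℂ)/(M:ℂ)]

noncomputable def lam2 (G M γ : ℝ) : ℂ :=
  (-3*(γ:ℂ) - Complex.I * (((12*M*G - 9*γ^2 : ℝ) : ℂ) ^ ((1:ℂ)/2))) / (2*(M:ℂ))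

noncomputable def lam3 (G M γ : ℝ) : ℂ :=
  (-3*(γ:ℂ) + Complex.I * (((12*M*G - 9*γ^2 : ℝ) : ℂ) ^ ((1:ℂ)/2))) / (2*(M:ℂ))

/-- Geometric multiplicity of an eigenvalue `μ` of `S`. -/
noncomputable def geomMult (G M γ : ℝ) (μ : ℂ) : ℕ :=
  Module.finrank ℂ
    (LinearMap.ker (Matrix.toLin' (μ • (1 : Matrix (Fin 6) (Fin 6) ℂ) - Smat G M γ)))

theorem det_aux (x a b g : ℂ) :
    Matrix.det (!![x, 0, 0, -a, 0, 0;
     0, x, 0, 0, -a, 0;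
     0, 0, x, 0, 0, -a;
     2*g, -g, -g, x+2*b, -b, -b;
     -g, 2*g, -g, -b, x+2*b, -b;
     -g, -g, 2*g, -b, -b, x+2*b] : Matrix (Fin 6) (Fin 6) ℂ)
     = x^2 * (x^2 + 3*b*x + 3*g*a)^2 := by
  simp [Matrix.det_succ_row_zero, Fin.sum_univ_succ, Fin.succAbove, Matrix.submatrix]
  ring

theorem smul_sub_eq (G M γ : ℝ) (x : ℂ) :
    x • (1 : Matrix (Fin 6) (Fin 6) ℂ) - Smat G M γ =
    !![x, 0, 0, -(1/(M:ℂ)), 0, 0;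
     0, x, 0, 0, -(1/(M:ℂ)), 0;
     0, 0, x, 0, 0, -(1/(M:ℂ));
     2*(G:ℂ), -(G:ℂ), -(G:ℂ), x+2*((γ:ℂ)/M), -((γ:ℂ)/M), -((γ:ℂ)/M);
     -(G:ℂ), 2*(G:ℂ), -(G:ℂ), -((γ:ℂ)/M), x+2*((γ:ℂ)/M), -((γ:ℂ)/M);
     -(G:ℂ), -(G:ℂ), 2*(G:ℂ), -((γ:ℂ)/M), -((γ:ℂ)/M), x+2*((γ:ℂ)/M)] := by
  ext i j
  fin_cases i <;> fin_cases j <;> simp [Smat, Matrix.one_apply] <;> ring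

theorem charpoly_eq (G M γ : ℝ) (p q : ℂ) (hs : p + q = -(3*((γ:ℂ)/M)))
    (hp : p * q = 3*(G:ℂ)*(1/(M:ℂ))) :
    (Smat G M γ).charpoly = (X - C 0)^2 * ((X - C p)^2 * (X - C q)^2) := by
  apply Polynomial.funext
  intro x
  rw [Matrix.eval_charpoly, Matrix.scalar_apply, ← Matrix.smul_one_eq_diagonal, smul_sub_eq, det_aux]
  simp only [eval_mul, eval_pow, eval_sub, eval_X, eval_C]
  rw [← hp, show 3 * ((γ:ℂ)/M) = -(p+q) by rw [hs]; ring]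
  ring

theorem mult_aux (a : ℂ) (q : ℂ[X]) (h : q.eval a ≠ 0) :
    ((X - C a)^2 * q).rootMultiplicity a = 2 := by
  have hq : q ≠ 0 := by rintro rfl; simp at h
  rw [mul_comm, Polynomial.rootMultiplicity_mul_X_sub_C_pow hq,
    Polynomial.rootMultiplicity_eq_zero h]

theorem mem_ker_iff (G M γ : ℝ) (x : ℂ) (v : Fin 6 → ℂ) :
    v ∈ LinearMap.ker (Matrix.toLin' (x • (1 : Matrix (Fin 6) (Fin 6) ℂ) - Smat G M γ)) ↔
    (x * v 0 - 1/(M:ℂ) * v 3 = 0 ∧ x * v 1 - 1/(M:ℂ) * v 4 = 0 ∧ x * v 2 - 1/(M:ℂ) * v 5 = 0 ∧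
     2*G*v 0 - G*v 1 - G*v 2 + (x+2*((γ:ℂ)/M))*v 3 - (γ:ℂ)/M*v 4 - (γ:ℂ)/M*v 5 = 0 ∧
     -G*v 0 + 2*G*v 1 - G*v 2 - (γ:ℂ)/M*v 3 + (x+2*((γ:ℂ)/M))*v 4 - (γ:ℂ)/M*v 5 = 0 ∧
     -G*v 0 - G*v 1 + 2*G*v 2 - (γ:ℂ)/M*v 3 - (γ:ℂ)/M*v 4 + (x+2*((γ:ℂ)/M))*v 5 = 0) := by
  rw [LinearMap.mem_ker, Matrix.toLin'_apply, smul_sub_eq, funext_iff]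
  simp only [Fin.forall_fin_succ, Matrix.mulVec, dotProduct, Fin.sum_univ_six]
  simp [sub_eq_add_neg, add_assoc]

theorem geom_nz (G M γ : ℝ) (hM : 0 < M) (x : ℂ) (hx : x ≠ 0)
    (hq : (M:ℂ)*x^2 + 3*γ*x + 3*G = 0) : geomMult G M γ x = 2 := by
  have hM' : (M:ℂ) ≠ 0 := by exact_mod_cast hM.ne'
  have hk : (G:ℂ) + γ*x ≠ 0 := by
    intro h0
    have : (M:ℂ)*x^2 = 0 := by linear_combination hq - 3*h0
    simp [hM', hx] at this
  let B : Matrix (Fin 6) (Fin 2) ℂ := !![1,0;0,1;-1,-1;M*x,0;0,M*x;-(M*x),-(M*x)]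
  have hB : ∀ w : Fin 2 → ℂ, Matrix.toLin' B w = ![w 0, w 1, -w 0 - w 1, M*x*w 0, M*x*w 1,
      -(M*x*w 0) - M*x*w 1] := by
    intro w
    ext i
    fin_cases i <;> simp [B, Matrix.mulVec, dotProduct, Fin.sum_univ_two, sub_eq_add_neg]
  have hinj : Function.Injective (Matrix.toLin' B) := by
    intro w w' hw
    rw [hB, hB] at hw
    have h0 := congrFun hw 0
    have h1 := congrFun hw 1
    ext i
    fin_cases i
    · simpa using h0
    · simpa using h1
  have hr : LinearMap.ker (Matrix.toLin' (x • (1 : Matrix (Fin 6) (Fin 6) ℂ) - Smat G M γ))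
      = LinearMap.range (Matrix.toLin' B) := by
    ext v
    rw [mem_ker_iff]
    constructor
    · rintro ⟨h1, h2, h3, h4, h5, h6⟩
      have e3 : v 3 = M*x*v 0 := by field_simp at h1; linear_combination -h1
      have e4 : v 4 = M*x*v 1 := by field_simp at h2; linear_combination -h2
      have e5 : v 5 = M*x*v 2 := by field_simp at h3; linear_combination -h3
      rw [e3, e4, e5] at h4
      have hs : ((G:ℂ) + γ*x) * (v 0 + v 1 + v 2) = 0 := by
        field_simp at h4
        linear_combination -h4 + v 0 * hq
      have e2 : v 2 = - v 0 - v 1 := by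
        have := (mul_eq_zero.mp hs).resolve_left hk
        linear_combination this
      refine ⟨![v 0, v 1], ?_⟩
      rw [hB]
      ext i
      fin_cases i <;> simp [e3, e4, e5, e2]
      ring
    · rintro ⟨w, rfl⟩
      rw [hB]
      simp
      refine ⟨?_, ?_, ?_, ?_, ?_, ?_⟩ <;> field_simp <;> try ring1
      · linear_combination w 0 * hq
      · linear_combination w 1 * hq
      · linear_combination -(w 0 + w 1) * hq
  unfold geomMult
  rw [hr, LinearMap.finrank_range_of_inj hinj]
  simp

theorem geom_z (G M γ : ℝ) (hG : 0 < G) (hM : 0 < M) : geomMult G M γ 0 = 1 := by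
  have hM' : (M:ℂ) ≠ 0 := by exact_mod_cast hM.ne'
  have hG' : (G:ℂ) ≠ 0 := by exact_mod_cast hG.ne'
  have hr : LinearMap.ker (Matrix.toLin' ((0:ℂ) • (1 : Matrix (Fin 6) (Fin 6) ℂ) - Smat G M γ))
      = Submodule.span ℂ {(![1,1,1,0,0,0] : Fin 6 → ℂ)} := by
    ext v
    rw [mem_ker_iff, Submodule.mem_span_singleton]
    constructor
    · rintro ⟨h1, h2, h3, h4, h5, h6⟩
      have e3 : v 3 = 0 := by simpa [hM'] using h1
      have e4 : v 4 = 0 := by simpa [hM'] using h2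
      have e5 : v 5 = 0 := by simpa [hM'] using h3
      rw [e3, e4, e5] at h4 h5
      have e1 : v 1 = v 0 := by
        apply mul_left_cancel₀ hG'
        linear_combination (h5 - h4)/3
      have e2 : v 2 = v 0 := by
        apply mul_left_cancel₀ hG'
        rw [e1] at h4
        linear_combination -h4
      refine ⟨v 0, ?_⟩
      ext i
      fin_cases i <;> simp [e1, e2, e3, e4, e5]
    · rintro ⟨c, rfl⟩
      simp
      refine ⟨?_, ?_, ?_⟩ <;> ring
  unfold geomMult
  rw [hr, finrank_span_singleton]
  intro h0
  simpa using congrFun h0 0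

/-- λ₂ and λ₃ are semi-simple (geometric = algebraic multiplicity = 2),
while the zero eigenvalue is defective (geometric 1, algebraic 2). -/
theorem stmt5 (G M γ : ℝ) (hG : 0 < G) (hM : 0 < M) (hγ : 0 < γ)
    (h : 12*M*G - 9*γ^2 ≠ 0) :
    (geomMult G M γ (lam2 G M γ) = 2 ∧
      (Smat G M γ).charpoly.rootMultiplicity (lam2 G M γ) = 2) ∧
    (geomMult G M γ (lam3 G M γ) = 2 ∧
      (Smat G M γ).charpoly.rootMultiplicity (lam3 G M γ) = 2) ∧
    (geomMult G M γ 0 = 1 ∧ (Smat G M γ).charpoly.rootMultiplicity 0 = 2) := by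
  have hM' : (M:ℂ) ≠ 0 := by exact_mod_cast hM.ne'
  have hG' : (G:ℂ) ≠ 0 := by exact_mod_cast hG.ne'
  obtain ⟨r, hr⟩ : ∃ r : ℂ, r = ((12*M*G - 9*γ^2 : ℝ) : ℂ) ^ ((1:ℂ)/2) := ⟨_, rfl⟩
  have hr2 : r^2 = 12*M*G - 9*γ^2 := by
    have := Complex.cpow_nat_inv_pow ((12*M*G - 9*γ^2 : ℝ) : ℂ) (n := 2) two_ne_zero
    rw [hr, one_div]
    push_cast at this ⊢
    exact this
  have hr0 : r ≠ 0 := by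
    rintro rfl
    apply h
    have : (12*M*G - 9*γ^2 : ℂ) = 0 := by rw [← hr2]; simp
    exact_mod_cast this
  have h2 : lam2 G M γ = (-3*(γ:ℂ) - Complex.I * r) / (2*(M:ℂ)) := by rw [hr]; rfl
  have h3 : lam3 G M γ = (-3*(γ:ℂ) + Complex.I * r) / (2*(M:ℂ)) := by rw [hr]; rfl
  have hI := Complex.I_sq
  generalize lam2 G M γ = p at *
  generalize lam3 G M γ = q at *
  have hs : p + q = -(3*((γ:ℂ)/M)) := by
    rw [h2, h3]; field_simp; ring
  have hp : p * q = 3*(G:ℂ)*(1/(M:ℂ)) := by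
    rw [h2, h3]; field_simp
    linear_combination hr2 - r^2 * hI
  have hne : q - p ≠ 0 := by
    have : q - p = Complex.I * r / M := by rw [h2, h3]; field_simp; ring
    rw [this]
    simp [hr0, hM']
  have hpq : p * q ≠ 0 := by rw [hp]; simp [hG', hM']
  have hp0 : p ≠ 0 := left_ne_zero_of_mul hpq
  have hq0 : q ≠ 0 := right_ne_zero_of_mul hpq
  have hne' : p - q ≠ 0 := by rw [← neg_sub]; exact neg_ne_zero.mpr hne
  have hs' : (M:ℂ) * (p + q) = -(3*γ) := by rw [hs]; field_simp
  have hp' : (M:ℂ) * (p * q) = 3*G := by rw [hp]; field_simp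
  have hc := charpoly_eq G M γ p q hs hp
  refine ⟨⟨geom_nz G M γ hM p hp0 ?_, ?_⟩, ⟨geom_nz G M γ hM q hq0 ?_, ?_⟩,
    geom_z G M γ hG hM, ?_⟩
  · linear_combination p * hs' - hp'
  · rw [hc, mul_left_comm]
    apply mult_aux
    simp [hp0, hne']
  · linear_combination q * hs' - hp'
  · rw [hc, ← mul_assoc, mul_comm]
    apply mult_aux
    simp [hq0, hne]
  · rw [hc]
    apply mult_aux
    simp [hp0, hq0]
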